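/- For every fixed ε ∈ (0, 1/2) and every dimension d ≥ 1: if an adaptive algorithm A using n function values satisfies sup over monotone f : [0,1]^d → [0,1] of |INT_d(f) − A(f)| ≤ ε, then n ≥ 2^d·(1 − 2ε). Hence the integration problem for monotone functions suffers from the curse of dimensionality. -/

import Mathlib

/-!
The argument is a fooling-function construction. Let `f₀` be the indicator of the half space
`∑ i, x i ≥ d / 2` and let `p k` be the points at which the algorithm samples `f₀`.
The smallest and the largest monotone `{0, 1}`-valued functions agreeing with `f₀` at all `p k` are
* the indicator of the upper set `⋃ Ici (p k)` over those `k` with `f₀ (p k) = 1`;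
* the indicator of the complement of the lower set `⋃ Iic (p k)` over those `k` with `f₀ (p k) = 0`.

The algorithm sees the same data for both (`infoValues_congr`), so it returns the same value and
the two integrals differ by at most `2ε`. By the inequality of arithmetic and geometric means
(`prod_le_half_pow`) each box `Icc (p k) 1` in the first case, and each box `Icc 0 (p k)` in the
second, has volume at most `2⁻ᵈ`. Each `k` contributes a box to only one of the two unions, so the
integrals differ by at least `1 - n 2⁻ᵈ`.
-/

open MeasureTheory

/-- The adaptively computed information values `y_k = f(t_k(y_1,…,y_{k-1}))`. -/
noncomputable def infoValues {d n : ℕ}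
    (t : (k : Fin n) → (Fin k.1 → ℝ) → (Fin d → ℝ))
    (f : (Fin d → ℝ) → ℝ) (k : Fin n) : ℝ :=
  f (t k (fun j => infoValues t f ⟨j.1, j.2.trans k.2⟩))
termination_by k.1

/-- A function that agrees with `g` at the points at which an adaptive algorithm samples `g`
produces the same data as `g`. -/
lemma infoValues_congr {d n : ℕ} (t : (k : Fin n) → (Fin k.1 → ℝ) → (Fin d → ℝ))
    (f g : (Fin d → ℝ) → ℝ)
    (h : ∀ k : Fin n, f (t k (fun j => infoValues t g ⟨j.1, j.2.trans k.2⟩)) =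
      g (t k (fun j => infoValues t g ⟨j.1, j.2.trans k.2⟩))) :
    infoValues t f = infoValues t g := by
  have key : ∀ m : ℕ, ∀ hm : m < n, infoValues t f ⟨m, hm⟩ = infoValues t g ⟨m, hm⟩ := by
    intro m
    induction m using Nat.strong_induction_on with
    | _ m ih =>
      intro hm
      have e : (fun j : Fin m => infoValues t f ⟨j.1, j.2.trans hm⟩) =
          (fun j : Fin m => infoValues t g ⟨j.1, j.2.trans hm⟩) :=
        funext fun j => ih j.1 j.2 _
      have hk := h ⟨m, hm⟩
      rw [infoValues, infoValues]
      exact (congrArg (fun y => f (t ⟨m, hm⟩ y)) e).trans hk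
  exact funext fun k => key k.1 k.2

/-- AM-GM in the form needed for box volumes: side lengths of mean at most `1 / 2` give volume at
most `2⁻ᵈ`. -/
lemma prod_le_half_pow {d : ℕ} (a : Fin d → ℝ) (h0 : ∀ i, 0 ≤ a i)
    (hs : ∑ i, a i ≤ d / 2) : ∏ i, a i ≤ (1 / 2) ^ d := by
  -- Multiply the bounds `2 a ≤ exp (2 a - 1)`.
  have h1 : ∏ i, (2 * a i) ≤ ∏ i, Real.exp (2 * a i - 1) :=
    Finset.prod_le_prod (fun i _ => mul_nonneg zero_le_two (h0 i)) fun i _ => by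
      linarith [Real.add_one_le_exp (2 * a i - 1)]
  rw [← Real.exp_sum, Finset.prod_mul_distrib, Finset.sum_sub_distrib, ← Finset.mul_sum] at h1
  simp only [Finset.prod_const, Finset.card_univ, Fintype.card_fin, Finset.sum_const,
    nsmul_eq_mul, mul_one] at h1
  have h2 : Real.exp (2 * ∑ i, a i - d) ≤ 1 := Real.exp_le_one_iff.mpr (by linarith)
  have h3 : (2 : ℝ) ^ d * ∏ i, a i ≤ 1 := h1.trans h2
  rw [one_div, inv_pow, ← one_div, le_div_iff₀ (by positivity)]
  linarith

lemma volume_real_Icc_le {d : ℕ} (a b : Fin d → ℝ) (hab : a ≤ b)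
    (hs : ∑ i, (b i - a i) ≤ d / 2) :
    (volume : Measure (Fin d → ℝ)).real (Set.Icc a b) ≤ (1 / 2) ^ d := by
  rw [measureReal_def, Real.volume_Icc_pi_toReal hab]
  exact prod_le_half_pow _ (fun i => sub_nonneg.mpr (hab i)) hs

lemma volume_real_biUnion_le {d n : ℕ} (s : Finset (Fin n)) (B : Fin n → Set (Fin d → ℝ))
    (h : ∀ k ∈ s, (volume : Measure (Fin d → ℝ)).real (B k) ≤ (1 / 2) ^ d) :
    (volume : Measure (Fin d → ℝ)).real (⋃ k ∈ s, B k) ≤ s.card * (1 / 2) ^ d := by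
  refine (measureReal_biUnion_finset_le s B).trans ?_
  simpa using Finset.sum_le_card_nsmul s _ _ h

/-- if an adaptive algorithm using `n` function values has worst case error
at most `ε ∈ (0,1/2)` for integration over monotone functions `f : [0,1]^d → [0,1]`,
then `n ≥ 2^d·(1 - 2ε)`: the curse of dimensionality for monotone integration. -/
theorem monotone_integration_curse (ε : ℝ) (hε : ε ∈ Set.Ioo (0 : ℝ) (1 / 2))
    (d n : ℕ) (hd : 1 ≤ d)
    (t : (k : Fin n) → (Fin k.1 → ℝ) → (Fin d → ℝ))
    (ht : ∀ k y, t k y ∈ Set.Icc (0 : Fin d → ℝ) 1)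
    (φ : (Fin n → ℝ) → ℝ)
    (herr : ∀ f : (Fin d → ℝ) → ℝ,
      MonotoneOn f (Set.Icc (0 : Fin d → ℝ) 1) →
      (∀ x ∈ Set.Icc (0 : Fin d → ℝ) 1, f x ∈ Set.Icc (0 : ℝ) 1) →
      |(∫ x in Set.Icc (0 : Fin d → ℝ) 1, f x) - φ (infoValues t f)| ≤ ε) :
    (n : ℝ) ≥ 2 ^ d * (1 - 2 * ε) := by
  classical
  set Q : Set (Fin d → ℝ) := Set.Icc 0 1 with hQ
  set H : Set (Fin d → ℝ) := {x | (d : ℝ) / 2 ≤ ∑ i, x i} with hH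
  have hHup : IsUpperSet H := fun x y hxy (hx : (d : ℝ) / 2 ≤ _) =>
    hx.trans (Finset.sum_le_sum fun i _ => hxy i)
  set f₀ : (Fin d → ℝ) → ℝ := H.indicator 1 with hf₀
  set p : Fin n → (Fin d → ℝ) :=
    fun k => t k (fun j => infoValues t f₀ ⟨j.1, j.2.trans k.2⟩) with hp
  have hpQ : ∀ k, p k ∈ Q := fun k => ht k _
  set P : Finset (Fin n) := Finset.univ.filter fun k => p k ∈ H with hP
  set N : Finset (Fin n) := Finset.univ.filter fun k => p k ∉ H with hN
  have hcard : (P.card : ℝ) + N.card = n := by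
    have := Finset.card_filter_add_card_filter_not (s := (Finset.univ : Finset (Fin n)))
      (fun k => p k ∈ H)
    rw [Finset.card_univ, Fintype.card_fin] at this
    exact_mod_cast this
  set U : Set (Fin d → ℝ) := ⋃ k ∈ P, Set.Ici (p k) with hU
  set L : Set (Fin d → ℝ) := ⋃ k ∈ N, Set.Iic (p k) with hL
  have hUm : MeasurableSet U := Finset.measurableSet_biUnion _ fun k _ => measurableSet_Ici
  have hLm : MeasurableSet L := Finset.measurableSet_biUnion _ fun k _ => measurableSet_Iic
  have hUup : IsUpperSet U := isUpperSet_iUnion₂ fun k _ => isUpperSet_Ici _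
  have hLup : IsUpperSet Lᶜ := (isLowerSet_iUnion₂ fun k _ => isLowerSet_Iic _).compl
  have memU : ∀ k, p k ∈ U ↔ p k ∈ H := by
    intro k
    simp only [hU, Set.mem_iUnion, Set.mem_Ici, exists_prop]
    constructor
    · rintro ⟨j, hj, hjk⟩
      exact hHup hjk (Finset.mem_filter.mp hj).2
    · exact fun h => ⟨k, Finset.mem_filter.mpr ⟨Finset.mem_univ _, h⟩, le_rfl⟩
  have memL : ∀ k, p k ∈ Lᶜ ↔ p k ∈ H := by
    intro k
    rw [Set.mem_compl_iff, not_iff_comm]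
    simp only [hL, Set.mem_iUnion, Set.mem_Iic, exists_prop]
    constructor
    · exact fun h => ⟨k, Finset.mem_filter.mpr ⟨Finset.mem_univ _, h⟩, le_rfl⟩
    · rintro ⟨j, hj, hjk⟩ h
      exact (Finset.mem_filter.mp hj).2 (hHup hjk h)
  -- An upper set that meets the sample points exactly as `H` does yields the data of `f₀`.
  have main : ∀ S : Set (Fin d → ℝ), MeasurableSet S → IsUpperSet S →
      (∀ k, p k ∈ S ↔ p k ∈ H) →
      |(volume : Measure (Fin d → ℝ)).real (S ∩ Q) - φ (infoValues t f₀)| ≤ ε := by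
    intro S hSm hS hSH
    have h1 := herr (S.indicator 1) ?_ ?_
    · rw [infoValues_congr t (S.indicator 1) f₀, integral_indicator_one hSm,
        measureReal_restrict_apply hSm] at h1
      · exact h1
      · intro k
        change S.indicator 1 (p k) = H.indicator 1 (p k)
        simp only [Set.indicator, hSH k]
    · intro x _ y _ hxy
      by_cases hx : x ∈ S
      · simp [hx, hS hxy hx]
      · simp only [Set.indicator_of_notMem hx]
        exact Set.indicator_nonneg (fun _ _ => zero_le_one) _
    · intro x _
      by_cases hx : x ∈ S <;> simp [hx]
  have hvQ : (volume : Measure (Fin d → ℝ)).real Q = 1 := by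
    rw [measureReal_def, Real.volume_Icc_pi_toReal zero_le_one]
    simp
  have hfin : ∀ (s : Finset (Fin n)) (a b : Fin n → Fin d → ℝ),
      (volume : Measure (Fin d → ℝ)) (⋃ k ∈ s, Set.Icc (a k) (b k)) ≠ ⊤ := fun s a b =>
    (s.isCompact_biUnion fun k _ => isCompact_Icc).measure_lt_top.ne
  have hvU : (volume : Measure (Fin d → ℝ)).real (U ∩ Q) ≤ P.card * (1 / 2) ^ d := by
    refine le_trans (measureReal_mono ?_ (hfin P p 1))
      (volume_real_biUnion_le P (fun k => Set.Icc (p k) 1) ?_)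
    · rintro x ⟨hx, hxQ⟩
      simp only [hU, Set.mem_iUnion, exists_prop] at hx ⊢
      obtain ⟨k, hk, hkx⟩ := hx
      exact ⟨k, hk, hkx, hxQ.2⟩
    · intro k hk
      have hk' : (d : ℝ) / 2 ≤ ∑ i, p k i := (Finset.mem_filter.mp hk).2
      refine volume_real_Icc_le _ _ (hpQ k).2 ?_
      simp only [Pi.one_apply, Finset.sum_sub_distrib, Finset.sum_const, Finset.card_univ,
        Fintype.card_fin, nsmul_eq_mul, mul_one]
      linarith
  have hvL : (volume : Measure (Fin d → ℝ)).real (L ∩ Q) ≤ N.card * (1 / 2) ^ d := by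
    refine le_trans (measureReal_mono ?_ (hfin N 0 p))
      (volume_real_biUnion_le N (fun k => Set.Icc 0 (p k)) ?_)
    · rintro x ⟨hx, hxQ⟩
      simp only [hL, Set.mem_iUnion, exists_prop] at hx ⊢
      obtain ⟨k, hk, hkx⟩ := hx
      exact ⟨k, hk, hxQ.1, hkx⟩
    · intro k hk
      have hk' : ¬ (d : ℝ) / 2 ≤ ∑ i, p k i := (Finset.mem_filter.mp hk).2
      refine volume_real_Icc_le _ _ (hpQ k).1 ?_
      simp only [Pi.zero_apply, sub_zero]
      linarith
  have hsplit : (volume : Measure (Fin d → ℝ)).real (L ∩ Q) +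
      (volume : Measure (Fin d → ℝ)).real (Lᶜ ∩ Q) = 1 := by
    rw [← hvQ, Set.inter_comm L, Set.inter_comm Lᶜ, ← Set.sdiff_eq]
    exact measureReal_inter_add_sdiff hLm isCompact_Icc.measure_lt_top.ne
  have e1 := (abs_le.mp (main U hUm hUup memU)).1
  have e2 := (abs_le.mp (main Lᶜ hLm.compl hLup memL)).2
  have e3 : 1 - 2 * ε ≤ n * (1 / 2) ^ d := by
    rw [← hcard, add_mul]
    linarith
  have h2 : (0 : ℝ) < 2 ^ d := by positivity
  calc (2 : ℝ) ^ d * (1 - 2 * ε) ≤ 2 ^ d * (n * (1 / 2) ^ d) :=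
        mul_le_mul_of_nonneg_left e3 h2.le
    _ = n := by
        rw [one_div, inv_pow]
        field_simp
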